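/- Let n ≥ 4 and let D_n denote the tree on n vertices obtained from a path on n−1 vertices by attaching one extra leaf to the second vertex of the path (the Dynkin diagram of type D_n). Then for all integers k, m: dim SH^k(D_n, m) = 1 if k = m and 0 ≤ k ≤ n; dim SH^k(D_n, m) = 1 if m = k+1 and 1 ≤ k ≤ n−3; and dim SH^k(D_n, m) = 0 otherwise. Equivalently, P_{D_n}(q,t) = P_{A_n}(q,t) + qt²·P_{A_{n−4}}(q,t). -/

import Mathlib

/-!
The cohomology is bounded by algebraic discrete Morse theory. Call two consecutive vertices of a
graph on `0, …, n - 1` active in a configuration if they are joined by a red edge, or are adjacent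
and carry the signs `+-`; toggling the leftmost active pair between these two states is an acyclic
matching on the basis of the complex. A critical configuration has no active pair, hence no red
edge between consecutive vertices. In `D_n` the only other edge is `{0, 2}`, so critical
configurations have at most one red edge and the cohomology is concentrated in `m = k` and
`m = k + 1`. The signs on the part of the path that is not covered increase from `-` to `+`, so
there are at most two critical configurations in each bidegree.

For `m = k` the cohomology is spanned by the sign assignments without red edges, modulo `+- ~ -+`
along each edge. In a connected graph this identifies all assignments with `k` minuses, while the
sum of the coefficients is an invariant, so the cohomology is one-dimensional. The dimension for
`m = k + 1` then follows from the Euler characteristic.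
-/

open Polynomial Matrix

attribute [local instance] Classical.propDecidable

namespace Seifert

variable {V : Type} [Fintype V]

/-- A matching of a graph `G`: a finite set of edges of `G` that are pairwise disjoint. -/
def IsMatching (G : SimpleGraph V) (R : Finset (Sym2 V)) : Prop :=
  (∀ e ∈ R, e ∈ G.edgeSet) ∧
    ∀ e ∈ R, ∀ f ∈ R, e ≠ f → ∀ v : V, v ∈ e → v ∉ f

/-- A perfect matching: a matching covering every vertex. -/
def IsPerfectMatching (G : SimpleGraph V) (R : Finset (Sym2 V)) : Prop :=
  IsMatching G R ∧ ∀ v : V, ∃ e ∈ R, v ∈ e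

/-- A configuration on `G`: a matching (the set of red edges) together with an assignment
of a sign (`true` = plus, `false` = minus) to every vertex not covered by a red edge;
vertices covered by a red edge get `none`. -/
structure Config (G : SimpleGraph V) where
  red : Finset (Sym2 V)
  matching : IsMatching G red
  sign : V → Option Bool
  sign_none : ∀ v : V, sign v = none ↔ ∃ e ∈ red, v ∈ e

instance (G : SimpleGraph V) : Finite (Config G) :=
  Finite.of_injective (fun C => (C.red, C.sign)) (by
    rintro ⟨r, hr, s, hs⟩ ⟨r', hr', s', hs'⟩ h
    simp only [Prod.mk.injEq] at h
    obtain ⟨h1, h2⟩ := h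
    subst h1; subst h2; rfl)

noncomputable instance (G : SimpleGraph V) : Fintype (Config G) := Fintype.ofFinite _

/-- The grading `Q`: the number of minuses. -/
noncomputable def Qg {G : SimpleGraph V} (C : Config G) : ℕ :=
  (Finset.univ.filter fun v : V => C.sign v = some false).card

/-- The grading `E`: the number of minuses plus the number of red edges. -/
noncomputable def Eg {G : SimpleGraph V} (C : Config G) : ℕ := Qg C + C.red.card

/-- `DStep C C'` holds iff `C'` is one of the summands of `D(C)`: it is obtained from `C`
by deleting one red edge `e` and assigning a plus to one endpoint of `e` and a minus to
the other. -/
def DStep {G : SimpleGraph V} (C C' : Config G) : Prop :=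
  ∃ e ∈ C.red, C'.red = C.red.erase e ∧
    (∀ x : V, x ∉ e → C'.sign x = C.sign x) ∧
    ∃ u v : V, e = s(u, v) ∧ C'.sign u = some true ∧ C'.sign v = some false

/-- `dStep C C'` holds iff `C'` is one of the summands of `d(C)`: it is obtained from `C`
by changing the sign of one vertex from plus to minus. -/
def dStep {G : SimpleGraph V} (C C' : Config G) : Prop :=
  C'.red = C.red ∧ ∃ w : V, C.sign w = some true ∧ C'.sign w = some false ∧
    ∀ x : V, x ≠ w → C'.sign x = C.sign x

/-- The linear map on spaces of `F₂`-valued functions induced by a relation `r`: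
the basis vector of `a` is sent to the sum of the basis vectors of all `b` with `r a b`. -/
noncomputable def sumLin {α β : Type} [Fintype α] (r : α → β → Prop) :
    (α → ZMod 2) →ₗ[ZMod 2] (β → ZMod 2) where
  toFun f b := ∑ a : α, if r a b then f a else 0
  map_add' f g := by
    funext b
    simp only [Pi.add_apply]
    rw [← Finset.sum_add_distrib]
    exact Finset.sum_congr rfl fun a _ => by by_cases h : r a b <;> simp [h]
  map_smul' c f := by
    funext b
    simp only [RingHom.id_apply, Pi.smul_apply, smul_eq_mul, Finset.mul_sum]
    exact Finset.sum_congr rfl fun a _ => by by_cases h : r a b <;> simp [h]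

/-- The differential `D` on the total Seifert complex `SC(T)`. -/
noncomputable def Dmap (G : SimpleGraph V) :
    (Config G → ZMod 2) →ₗ[ZMod 2] (Config G → ZMod 2) :=
  sumLin DStep

/-- The differential `d` on the total Seifert complex `SC(T)`. -/
noncomputable def dmap (G : SimpleGraph V) :
    (Config G → ZMod 2) →ₗ[ZMod 2] (Config G → ZMod 2) :=
  sumLin dStep

/-- The graded piece `SC^k(T,n)`: the `F₂`-vector space with basis the configurations
with `Q = k` and `E = n`. -/
abbrev SC (G : SimpleGraph V) (k n : ℤ) : Type :=
  {C : Config G // (Qg C : ℤ) = k ∧ (Eg C : ℤ) = n} → ZMod 2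

/-- The differential `D` between graded pieces. (Mathematically it is nonzero only
from `SC^k(T,n)` to `SC^{k+1}(T,n)`.) -/
noncomputable def Dgr (G : SimpleGraph V) (k n k' n' : ℤ) :
    SC G k n →ₗ[ZMod 2] SC G k' n' :=
  sumLin fun C C' => DStep C.1 C'.1

/-- The dimension of the cohomology `ker g / im f` at the middle term of `A —f→ B —g→ C`
(taking the image of `f` intersected with the kernel of `g`). -/
noncomputable def cohDim {A B M : Type} [AddCommGroup A] [AddCommGroup B] [AddCommGroup M]
    [Module (ZMod 2) A] [Module (ZMod 2) B] [Module (ZMod 2) M]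
    (f : A →ₗ[ZMod 2] B) (g : B →ₗ[ZMod 2] M) : ℕ :=
  Module.finrank (ZMod 2)
    (LinearMap.ker g ⧸ (LinearMap.range f).comap (LinearMap.ker g).subtype)

/-- The dimension of the Seifert cohomology `SH^k(T,n)`. -/
noncomputable def SHdim (G : SimpleGraph V) (k n : ℤ) : ℕ :=
  cohDim (Dgr G (k - 1) n k n) (Dgr G k n (k + 1) n)

/-- The Seifert matrix of a graph with respect to an enumeration of its vertices. -/
noncomputable def seifertMatrix (G : SimpleGraph V) {m : ℕ} (e : V ≃ Fin m) :
    Matrix (Fin m) (Fin m) ℤ := fun i j =>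
  if i = j then -1 else if i < j ∧ G.Adj (e.symm i) (e.symm j) then 1 else 0

/-- The Alexander polynomial `det (t S - Sᵀ)` of a graph with respect to an enumeration
of its vertices. -/
noncomputable def alexDet (G : SimpleGraph V) {m : ℕ} (e : V ≃ Fin m) : Polynomial ℤ :=
  let S : Matrix (Fin m) (Fin m) (Polynomial ℤ) :=
    (seifertMatrix G e).map fun a => (Polynomial.C a : Polynomial ℤ)
  ((X : Polynomial ℤ) • S - Sᵀ).det

/-- The Alexander polynomial of a graph (or forest), defined as the matching polynomial
`Σ_R t^{|R|} (1-t)^{V - 2|R|}`, the sum being over all matchings `R`. -/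
noncomputable def alexMatch (G : SimpleGraph V) : Polynomial ℤ :=
  ∑ R : {R : Finset (Sym2 V) // IsMatching G R},
    X ^ R.1.card * (1 - X) ^ (Fintype.card V - 2 * R.1.card)


/-- The Dynkin diagram `D_n`: a path on the `n - 1` vertices `1, …, n-1` together with an
extra leaf `0` attached to the second vertex `2` of the path. -/
def dynkinD (n : ℕ) : SimpleGraph (Fin n) :=
  SimpleGraph.fromRel fun i j =>
    ((i : ℕ) = 0 ∧ (j : ℕ) = 2) ∨ (1 ≤ (i : ℕ) ∧ (j : ℕ) = (i : ℕ) + 1)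


variable {G : SimpleGraph V}

/-! ### Resolving a red edge -/

section Resolves

omit [Fintype V]

attribute [ext] Config

namespace Config

variable {C C' C'' C₁ C₂ : Config G} {u v x y : V}

/-- The configuration with red edges `R` whose uncovered vertices `v` carry the sign `s v`. -/
noncomputable def ofSigns {R : Finset (Sym2 V)} (hR : IsMatching G R) (s : V → Bool) :
    Config G where
  red := R
  matching := hR
  sign v := if ∃ e ∈ R, v ∈ e then none else some (s v)
  sign_none v := by split_ifs with h <;> simp [h]

theorem exists_eq_ofSigns {R : Finset (Sym2 V)} (hR : IsMatching G R) (h : C.red = R) :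
    ∃ s, C = ofSigns hR s := by
  refine ⟨fun v => C.sign v = some true, Config.ext h (funext fun v => ?_)⟩
  simp only [ofSigns, ← h, ← C.sign_none]
  rcases C.sign v with _ | _ | _ <;> simp

theorem sign_eq_none_left (h : s(u, v) ∈ C.red) : C.sign u = none :=
  (C.sign_none u).2 ⟨_, h, Sym2.mem_mk_left u v⟩

theorem sign_eq_none_right (h : s(u, v) ∈ C.red) : C.sign v = none :=
  (C.sign_none v).2 ⟨_, h, Sym2.mem_mk_right u v⟩

theorem eq_of_mem_red {e f : Sym2 V} (he : e ∈ C.red) (hf : f ∈ C.red) (hve : v ∈ e)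
    (hvf : v ∈ f) : e = f := by
  by_contra h
  exact C.matching.2 e he f hf h v hve hvf

/-- `C.Resolves C' u v`: the configuration `C'` is the summand of `D(C)` in which the red edge
`uv` of `C` has been deleted, `u` becoming a plus and `v` a minus. -/
structure Resolves (C C' : Config G) (u v : V) : Prop where
  mem_red : s(u, v) ∈ C.red
  red_eq : C'.red = C.red.erase s(u, v)
  sign_eq : ∀ x, x ≠ u → x ≠ v → C'.sign x = C.sign x
  sign_left : C'.sign u = some true
  sign_right : C'.sign v = some false

theorem exists_resolves (h : s(u, v) ∈ C.red) : ∃ C' : Config G, C.Resolves C' u v := by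
  have hne : u ≠ v := (C.matching.1 _ h).ne
  have hcov (x : V) : (∃ e ∈ C.red.erase s(u, v), x ∈ e) ↔
      (∃ e ∈ C.red, x ∈ e) ∧ x ≠ u ∧ x ≠ v := by
    constructor
    · rintro ⟨e, he, hx⟩
      replace ⟨hne, he⟩ := Finset.mem_erase.1 he
      refine ⟨⟨e, he, hx⟩, ?_, ?_⟩ <;> rintro rfl <;>
        exact hne (eq_of_mem_red ‹e ∈ C.red› h hx (by simp))
    · rintro ⟨⟨e, he, hx⟩, hxu, hxv⟩
      exact ⟨e, Finset.mem_erase.2 ⟨by rintro rfl; simp [hxu, hxv] at hx, he⟩, hx⟩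
  refine ⟨ofSigns (R := C.red.erase s(u, v))
    ⟨fun e he => C.matching.1 e (Finset.mem_of_mem_erase he), fun e he f hf =>
      C.matching.2 e (Finset.mem_of_mem_erase he) f (Finset.mem_of_mem_erase hf)⟩
    (fun x => if x = u then true else if x = v then false else C.sign x = some true),
    h, rfl, fun x hxu hxv => ?_, ?_, ?_⟩
  · simp only [ofSigns, hcov, hxu, hxv, ← C.sign_none]
    rcases C.sign x with _ | _ | _ <;> simp [hxu, hxv]
  · simp only [ofSigns, hcov, ne_eq, not_true, false_and, and_false, if_false, if_true]
  · simp only [ofSigns, hcov, ne_eq, not_true, and_false, if_false, if_true, hne.symm]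

theorem exists_resolves_right (huv : G.Adj u v) (hu : C'.sign u = some true)
    (hv : C'.sign v = some false) : ∃ C : Config G, C.Resolves C' u v := by
  have hcov {x : V} {b : Bool} (hx : C'.sign x = some b) : ∀ e ∈ C'.red, x ∉ e := by
    intro e he hxe
    simp [(C'.sign_none x).2 ⟨e, he, hxe⟩] at hx
  have hdisj {f : Sym2 V} (hf : f ∈ C'.red) {x : V} (hx : x ∈ s(u, v)) : x ∉ f := by
    rcases Sym2.mem_iff.1 hx with rfl | rfl
    exacts [hcov hu f hf, hcov hv f hf]
  have hmatching : IsMatching G (insert s(u, v) C'.red) := by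
    refine ⟨(Finset.forall_mem_insert _ _ _).2 ⟨huv, C'.matching.1⟩,
      fun e he f hf hef x hxe hxf => ?_⟩
    rcases Finset.mem_insert.1 he with rfl | he <;> rcases Finset.mem_insert.1 hf with rfl | hf
    · exact hef rfl
    · exact hdisj hf hxe hxf
    · exact hdisj he hxf hxe
    · exact C'.matching.2 e he f hf hef x hxe hxf
  refine ⟨ofSigns hmatching (fun x => C'.sign x = some true), Finset.mem_insert_self _ _,
    (Finset.erase_insert fun h => hcov hu _ h (by simp)).symm, fun x hxu hxv => ?_, hu, hv⟩
  simp only [ofSigns, Finset.exists_mem_insert, Sym2.mem_iff, hxu, hxv, or_self, false_or,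
    ← C'.sign_none]
  rcases C'.sign x with _ | _ | _ <;> simp

namespace Resolves

theorem adj (h : C.Resolves C' u v) : G.Adj u v := C.matching.1 _ h.mem_red

theorem red_eq_insert (h : C.Resolves C' u v) : C.red = insert s(u, v) C'.red := by
  rw [h.red_eq, Finset.insert_erase h.mem_red]

theorem notMem_red (h : C.Resolves C' u v) : s(u, v) ∉ C'.red := by
  simp [h.red_eq]

theorem right_unique (h : C.Resolves C' u v) (h' : C.Resolves C'' u v) : C' = C'' := by
  ext1
  · rw [h.red_eq, h'.red_eq]
  · funext x
    by_cases hxu : x = u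
    · rw [hxu, h.sign_left, h'.sign_left]
    by_cases hxv : x = v
    · rw [hxv, h.sign_right, h'.sign_right]
    rw [h.sign_eq x hxu hxv, h'.sign_eq x hxu hxv]

theorem left_unique (h : C.Resolves C'' u v) (h' : C'.Resolves C'' u v) : C = C' := by
  ext1
  · rw [h.red_eq_insert, h'.red_eq_insert]
  · funext x
    by_cases hxu : x = u
    · rw [hxu, sign_eq_none_left h.mem_red, sign_eq_none_left h'.mem_red]
    by_cases hxv : x = v
    · rw [hxv, sign_eq_none_right h.mem_red, sign_eq_none_right h'.mem_red]
    rw [← h.sign_eq x hxu hxv, ← h'.sign_eq x hxu hxv]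

theorem sign_eq_some_false_iff (h : C.Resolves C' u v) (x : V) :
    C'.sign x = some false ↔ x = v ∨ C.sign x = some false := by
  by_cases hxu : x = u
  · simp [hxu, h.sign_left, sign_eq_none_left h.mem_red, h.adj.ne]
  by_cases hxv : x = v
  · simp [hxv, h.sign_right]
  · simp [hxv, h.sign_eq x hxu hxv]

theorem sum_red {M : Type*} [AddCommMonoid M] (h : C.Resolves C' u v) (w : Sym2 V → M) :
    ∑ e ∈ C.red, w e = w s(u, v) + ∑ e ∈ C'.red, w e := by
  rw [h.red_eq_insert, Finset.sum_insert h.notMem_red]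

theorem ne_of_resolves (h : C.Resolves C₁ u v) (h' : C₁.Resolves C₂ x y) :
    (x ≠ u ∧ x ≠ v) ∧ y ≠ u ∧ y ≠ v := by
  have hx := sign_eq_none_left h'.mem_red
  have hy := sign_eq_none_right h'.mem_red
  refine ⟨⟨?_, ?_⟩, ?_, ?_⟩ <;> rintro rfl <;> simp_all [h.sign_left, h.sign_right]

theorem sign_of_resolves (h : C.Resolves C₁ u v) (h' : C₁.Resolves C₂ x y) :
    C₂.sign u = some true ∧ C₂.sign v = some false := by
  obtain ⟨⟨hxu, hxv⟩, hyu, hyv⟩ := h.ne_of_resolves h'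
  exact ⟨by rw [h'.sign_eq u hxu.symm hyu.symm, h.sign_left],
    by rw [h'.sign_eq v hxv.symm hyv.symm, h.sign_right]⟩

theorem swap (h : C.Resolves C₁ u v) (h' : C₁.Resolves C₂ x y) :
    ∃ C₃ : Config G, C.Resolves C₃ x y ∧ C₃.Resolves C₂ u v := by
  have hne : s(u, v) ≠ s(x, y) := by
    intro heq
    exact h.notMem_red (heq ▸ h'.mem_red)
  obtain ⟨C₃, h₃⟩ := exists_resolves (C := C) (u := x) (v := y)
    (by rw [h.red_eq_insert]; exact Finset.mem_insert_of_mem h'.mem_red)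
  refine ⟨C₃, h₃, ?_, ?_, fun z hzu hzv => ?_, (h.sign_of_resolves h').1,
    (h.sign_of_resolves h').2⟩
  · rw [h₃.red_eq]
    exact Finset.mem_erase.2 ⟨hne, h.mem_red⟩
  · rw [h'.red_eq, h.red_eq, h₃.red_eq, Finset.erase_right_comm]
  · by_cases hzx : z = x
    · rw [hzx, h'.sign_left, h₃.sign_left]
    by_cases hzy : z = y
    · rw [hzy, h'.sign_right, h₃.sign_right]
    rw [h'.sign_eq z hzx hzy, h₃.sign_eq z hzx hzy, h.sign_eq z hzu hzv]

theorem left_or_right (h : C.Resolves C₁ u v) (h' : C₁.Resolves C₂ x y) {C₃ D : Config G}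
    (h₃ : C.Resolves C₃ x y) {a b c d : V} (hD : C.Resolves D a b) (hD' : D.Resolves C₂ c d) :
    D = C₁ ∨ D = C₃ := by
  obtain ⟨hu, hv⟩ := h.sign_of_resolves h'
  have hb := (hD.sign_of_resolves hD').2
  have hab : s(a, b) = s(u, v) ∨ s(a, b) = s(x, y) := by
    have hC : s(a, b) ∈ insert s(u, v) (insert s(x, y) C₂.red) :=
      h'.red_eq_insert ▸ h.red_eq_insert ▸ hD.mem_red
    have hC₂ : s(a, b) ∉ C₂.red := fun hmem =>
      hD.notMem_red (hD'.red_eq_insert ▸ Finset.mem_insert_of_mem hmem)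
    simpa only [Finset.mem_insert, hC₂, or_false] using hC
  rcases hab with heq | heq <;> rcases Sym2.eq_iff.1 heq with ⟨rfl, rfl⟩ | ⟨rfl, rfl⟩
  · exact Or.inl (hD.right_unique h)
  · simp [hu] at hb
  · exact Or.inr (hD.right_unique h₃)
  · simp [h'.sign_left] at hb

end Resolves

end Config

theorem DStep_iff_exists_resolves {C C' : Config G} :
    DStep C C' ↔ ∃ u v, C.Resolves C' u v := by
  constructor
  · rintro ⟨_, hmem, hred, hsign, u, v, rfl, hu, hv⟩
    exact ⟨u, v, hmem, hred, fun x hxu hxv => hsign x (by simp [hxu, hxv]), hu, hv⟩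
  · rintro ⟨u, v, h⟩
    exact ⟨_, h.mem_red, h.red_eq, fun x hx => by
      rw [Sym2.mem_iff, not_or] at hx
      exact h.sign_eq x hx.1 hx.2, u, v, rfl, h.sign_left, h.sign_right⟩

end Resolves

namespace Config.Resolves

variable {C C' : Config G} {u v : V}

theorem sum_minus {M : Type*} [AddCommMonoid M] (h : C.Resolves C' u v) (w : V → M) :
    ∑ x with C'.sign x = some false, w x = w v + ∑ x with C.sign x = some false, w x := by
  have hins : ({x | C'.sign x = some false} : Finset V) =
      insert v ({x | C.sign x = some false} : Finset V) := by
    ext x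
    simp [h.sign_eq_some_false_iff]
  rw [hins, Finset.sum_insert (by simp [sign_eq_none_right h.mem_red])]

theorem qg_eq (h : C.Resolves C' u v) : Qg C' = Qg C + 1 := by
  simpa only [Qg, Finset.card_eq_sum_ones, add_comm] using h.sum_minus fun _ => 1

theorem eg_eq (h : C.Resolves C' u v) : Eg C' = Eg C := by
  have hred : C.red.card = 1 + C'.red.card := by
    simpa only [Finset.card_eq_sum_ones] using h.sum_red fun _ => 1
  rw [Eg, Eg, h.qg_eq, hred]
  ring

end Config.Resolves

theorem even_card_DStep_DStep (C C₂ : Config G) :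
    Even (Finset.univ.filter fun C₁ => DStep C C₁ ∧ DStep C₁ C₂).card := by
  by_cases hex : ∃ C₁, DStep C C₁ ∧ DStep C₁ C₂
  swap
  · rw [Finset.filter_false_of_mem fun C₁ _ h => hex ⟨C₁, h⟩]
    exact Even.zero
  obtain ⟨C₁, h₁, h₂⟩ := hex
  obtain ⟨u, v, h₁⟩ := DStep_iff_exists_resolves.1 h₁
  obtain ⟨x, y, h₂⟩ := DStep_iff_exists_resolves.1 h₂
  obtain ⟨C₃, h₃, h₄⟩ := h₁.swap h₂
  have hne : C₁ ≠ C₃ := by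
    rintro rfl
    exact h₁.notMem_red h₄.mem_red
  suffices h : (Finset.univ.filter fun D => DStep C D ∧ DStep D C₂) = {C₁, C₃} by
    rw [h, Finset.card_pair hne]
    exact even_two
  ext D
  simp only [Finset.mem_filter_univ, Finset.mem_insert, Finset.mem_singleton,
    DStep_iff_exists_resolves]
  constructor
  · rintro ⟨⟨a, b, hD⟩, c, d, hD'⟩
    exact h₁.left_or_right h₂ h₃ hD hD'
  · rintro (rfl | rfl)
    exacts [⟨⟨u, v, h₁⟩, x, y, h₂⟩, ⟨⟨x, y, h₃⟩, u, v, h₄⟩]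

/-! ### Linear maps induced by relations -/

section sumLin

variable {α β γ : Type} [Fintype α] {r : α → β → Prop} {s : β → γ → Prop}

theorem sumLin_single [DecidableEq α] (r : α → β → Prop) (a : α) :
    sumLin r (Pi.single a 1) = fun b => if r a b then 1 else 0 := by
  funext b
  exact (Fintype.sum_eq_single a fun x hx => by simp [hx]).trans (by simp)

theorem sumLin_comp_sumLin_eq_zero [Fintype β]
    (h : ∀ a c, Even (Finset.univ.filter fun b => r a b ∧ s b c).card) :
    sumLin s ∘ₗ sumLin r = 0 := by
  refine LinearMap.pi_ext' fun a => LinearMap.ext_ring ?_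
  funext c
  have hsum : sumLin s (sumLin r (Pi.single a 1)) c =
      ((Finset.univ.filter fun b => r a b ∧ s b c).card : ZMod 2) := by
    rw [sumLin_single]
    simp [sumLin, ← ite_and, and_comm]
  simpa [hsum] using (ZMod.natCast_eq_zero_iff_even).2 (h a c)

theorem card_le_finrank_range_sumLin {ι : Type} [Fintype ι] (a : ι → α) (b : ι → β) (ω : ι → ℕ)
    (hdiag : ∀ i, r (a i) (b i)) (htri : ∀ i j, r (a j) (b i) → i ≠ j → ω i < ω j) :
    Fintype.card ι ≤ Module.finrank (ZMod 2) (LinearMap.range (sumLin r)) := by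
  have hli : LinearIndependent (ZMod 2) fun i => sumLin r (Pi.single (a i) 1) := by
    rw [Fintype.linearIndependent_iff]
    intro g hg
    by_contra! hne
    obtain ⟨i, hi, hmax⟩ := Finset.exists_max_image (Finset.univ.filter fun i => g i ≠ 0) ω
      (by simpa [Finset.Nonempty] using hne)
    simp only [Finset.mem_filter_univ] at hi hmax
    have hcoeff (j : ι) (hj : j ≠ i) : g j * (if r (a j) (b i) then 1 else 0) = 0 := by
      split_ifs with hr
      · rw [mul_one]
        by_contra hgj
        exact (hmax j hgj).not_gt (htri i j hr hj.symm)
      · exact mul_zero _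
    apply hi
    simpa only [sumLin_single, Finset.sum_apply, Pi.smul_apply, smul_eq_mul, hdiag, if_true,
      mul_one, Fintype.sum_eq_single i hcoeff, Pi.zero_apply] using congrFun hg (b i)
  rw [← finrank_span_eq_card hli]
  exact Submodule.finrank_mono (Submodule.span_le.2 (by rintro _ ⟨i, rfl⟩; exact ⟨_, rfl⟩))

end sumLin

theorem cohDim_add_finrank_range {A B M : Type} [AddCommGroup A] [AddCommGroup B]
    [AddCommGroup M] [Module (ZMod 2) A] [Module (ZMod 2) B] [Module (ZMod 2) M]
    [FiniteDimensional (ZMod 2) B] {f : A →ₗ[ZMod 2] B} {g : B →ₗ[ZMod 2] M}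
    (hgf : g ∘ₗ f = 0) :
    cohDim f g + Module.finrank (ZMod 2) (LinearMap.range f) +
      Module.finrank (ZMod 2) (LinearMap.range g) = Module.finrank (ZMod 2) B := by
  have hle : LinearMap.range f ≤ LinearMap.ker g := LinearMap.range_le_ker_iff.2 hgf
  rw [cohDim, ← (Submodule.comapSubtypeEquivOfLe hle).finrank_eq,
    Submodule.finrank_quotient_add_finrank, add_comm, LinearMap.finrank_range_add_finrank_ker]

/-! ### Ranks and Betti numbers -/

theorem DStep.qg_eq {C C' : Config G} (h : DStep C C') : Qg C' = Qg C + 1 := by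
  obtain ⟨u, v, h⟩ := DStep_iff_exists_resolves.1 h
  exact h.qg_eq

theorem DStep.eg_eq {C C' : Config G} (h : DStep C C') : Eg C' = Eg C := by
  obtain ⟨u, v, h⟩ := DStep_iff_exists_resolves.1 h
  exact h.eg_eq

theorem card_filter_subtype_eq {α : Type*} [Fintype α] {p q : α → Prop} [DecidablePred p]
    [DecidablePred q] (h : ∀ a, q a → p a) :
    (Finset.univ.filter fun a : {a // p a} => q a).card = (Finset.univ.filter q).card := by
  rw [← Finset.card_map (Function.Embedding.subtype p)]
  congr 1
  ext a
  simpa using h a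

theorem Dgr_comp_Dgr (k m : ℤ) : Dgr G k m (k + 1) m ∘ₗ Dgr G (k - 1) m k m = 0 := by
  refine sumLin_comp_sumLin_eq_zero fun C C₂ => ?_
  rw [card_filter_subtype_eq fun C₁ (h : DStep C.1 C₁ ∧ DStep C₁ C₂.1) => ?_]
  · exact even_card_DStep_DStep C.1 C₂.1
  · have hQ := h.1.qg_eq
    have hE := h.1.eg_eq
    have hC := C.2
    exact ⟨by lia, by lia⟩

/-- The rank of the differential `D` on `SC^k(G,m)`. -/
noncomputable def rankD (G : SimpleGraph V) (k m : ℤ) : ℕ :=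
  Module.finrank (ZMod 2) (LinearMap.range (Dgr G k m (k + 1) m))

theorem finrank_range_Dgr {k k' : ℤ} (m : ℤ) (hk : k + 1 = k') :
    Module.finrank (ZMod 2) (LinearMap.range (Dgr G k m k' m)) = rankD G k m := by
  subst hk
  rfl

theorem SHdim_add_rankD (G : SimpleGraph V) (k m : ℤ) :
    SHdim G k m + rankD G (k - 1) m + rankD G k m =
      Fintype.card {C : Config G // (Qg C : ℤ) = k ∧ (Eg C : ℤ) = m} := by
  rw [← Module.finrank_fintype_fun_eq_card (ZMod 2), ← cohDim_add_finrank_range (Dgr_comp_Dgr k m),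
    finrank_range_Dgr m (sub_add_cancel k 1)]
  rfl

/-! ### Morse matchings -/

/-- An acyclic matching on the basis of the Seifert complex, in the sense of algebraic discrete
Morse theory: `M C C'` pairs the basis element `C` with a summand `C'` of `D(C)`. The weight `ω`
makes the part of `D` between matched pairs unitriangular. -/
structure IsMorseMatching (M : Config G → Config G → Prop) (ω : Config G → ℕ) : Prop where
  step {C C' : Config G} : M C C' → DStep C C'
  biUnique : Relator.BiUnique M
  disjoint {C₁ C₂ C₃ : Config G} : M C₁ C₂ → ¬M C₂ C₃
  lt_of_DStep {C C' C₁ C₁' : Config G} :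
    M C C' → M C₁ C₁' → DStep C₁ C' → C ≠ C₁ → ω C < ω C₁

/-- A configuration is critical for a matching if it is not matched. -/
def IsCritical (M : Config G → Config G → Prop) (C : Config G) : Prop :=
  ∀ D, ¬M C D ∧ ¬M D C

/-- The number of critical configurations in `SC^k(G,m)`. -/
noncomputable def numCritical (M : Config G → Config G → Prop) (k m : ℤ) : ℕ :=
  (Finset.univ.filter fun C => IsCritical M C ∧ (Qg C : ℤ) = k ∧ (Eg C : ℤ) = m).card

/-- The matched pairs whose first member lies in `SC^k(G,m)`. -/
noncomputable def matchedPairs (M : Config G → Config G → Prop) (k m : ℤ) :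
    Finset (Config G × Config G) :=
  Finset.univ.filter fun p => M p.1 p.2 ∧ (Qg p.1 : ℤ) = k ∧ (Eg p.1 : ℤ) = m

theorem mem_matchedPairs {M : Config G → Config G → Prop} {k m : ℤ} {p : Config G × Config G} :
    p ∈ matchedPairs M k m ↔ M p.1 p.2 ∧ (Qg p.1 : ℤ) = k ∧ (Eg p.1 : ℤ) = m :=
  Finset.mem_filter_univ p

namespace IsMorseMatching

variable {M : Config G → Config G → Prop} {ω : Config G → ℕ}

theorem grading_snd (hM : IsMorseMatching M ω) {C C' : Config G} {k m : ℤ} (h : M C C')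
    (hC : (Qg C : ℤ) = k ∧ (Eg C : ℤ) = m) : (Qg C' : ℤ) = k + 1 ∧ (Eg C' : ℤ) = m := by
  rw [(hM.step h).qg_eq, (hM.step h).eg_eq]
  exact ⟨by rw [Nat.cast_add_one, hC.1], hC.2⟩

theorem card_matchedPairs_le_rankD (hM : IsMorseMatching M ω) (k m : ℤ) :
    (matchedPairs M k m).card ≤ rankD G k m := by
  have hmem (p : matchedPairs M k m) := mem_matchedPairs.1 p.2
  have hsnd (p : matchedPairs M k m) := hM.grading_snd (hmem p).1 (hmem p).2
  rw [← Fintype.card_coe]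
  refine card_le_finrank_range_sumLin
    (r := fun (C : {C : Config G // (Qg C : ℤ) = k ∧ (Eg C : ℤ) = m})
      (C' : {C : Config G // (Qg C : ℤ) = k + 1 ∧ (Eg C : ℤ) = m}) => DStep C.1 C'.1)
    (fun p => ⟨p.1.1, (hmem p).2⟩) (fun p => ⟨p.1.2, hsnd p⟩) (fun p => ω p.1.1)
    (fun p => hM.step (hmem p).1) fun p q hqp hne => ?_
  refine hM.lt_of_DStep (hmem p).1 (hmem q).1 hqp fun heq => hne (Subtype.ext (Prod.ext heq ?_))
  exact hM.biUnique.2 (heq ▸ (hmem p).1) (hmem q).1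

theorem card_matchedPairs_eq_card_left (hM : IsMorseMatching M ω) (k m : ℤ) :
    (matchedPairs M k m).card =
      (Finset.univ.filter fun C => ((Qg C : ℤ) = k ∧ (Eg C : ℤ) = m) ∧ ∃ C', M C C').card := by
  have hinj : Set.InjOn Prod.fst (matchedPairs M k m : Set (Config G × Config G)) := by
    intro p hp q hq h
    exact Prod.ext h (hM.biUnique.2 (h ▸ (mem_matchedPairs.1 hp).1) (mem_matchedPairs.1 hq).1)
  rw [← Finset.card_image_of_injOn hinj]
  congr 1
  ext C
  simp only [Finset.mem_image, mem_matchedPairs, Finset.mem_filter_univ, Prod.exists,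
    exists_and_right, exists_eq_right]
  exact and_comm

theorem card_matchedPairs_eq_card_right (hM : IsMorseMatching M ω) (k m : ℤ) :
    (matchedPairs M (k - 1) m).card =
      (Finset.univ.filter fun C => ((Qg C : ℤ) = k ∧ (Eg C : ℤ) = m) ∧ ∃ C', M C' C).card := by
  have hinj : Set.InjOn Prod.snd (matchedPairs M (k - 1) m : Set (Config G × Config G)) := by
    intro p hp q hq h
    exact Prod.ext (hM.biUnique.1 (h ▸ (mem_matchedPairs.1 hp).1) (mem_matchedPairs.1 hq).1) h
  rw [← Finset.card_image_of_injOn hinj]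
  congr 1
  ext C
  simp only [Finset.mem_image, mem_matchedPairs, Finset.mem_filter_univ, Prod.exists,
    exists_eq_right]
  constructor
  · rintro ⟨C', h, hC'⟩
    exact ⟨by simpa using hM.grading_snd h hC', C', h⟩
  · rintro ⟨hC, C', h⟩
    have hQ := (hM.step h).qg_eq
    have hE := (hM.step h).eg_eq
    exact ⟨C', h, by lia, by lia⟩

theorem card_gradedPiece (hM : IsMorseMatching M ω) (k m : ℤ) :
    Fintype.card {C : Config G // (Qg C : ℤ) = k ∧ (Eg C : ℤ) = m} =
      (matchedPairs M k m).card + (matchedPairs M (k - 1) m).card + numCritical M k m := by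
  have hnot_left (C : Config G) :
      (∃ C', M C' C) ∨ IsCritical M C ↔ ¬∃ C', M C C' := by
    simp only [IsCritical, forall_and, not_exists]
    refine ⟨?_, fun h => (em _).imp_right fun h' => ⟨h, not_exists.1 h'⟩⟩
    rintro (⟨C', h⟩ | h)
    exacts [fun _ => hM.disjoint h, h.1]
  have hdisj (C : Config G) : ¬((∃ C', M C' C) ∧ IsCritical M C) := by
    rintro ⟨⟨C', h⟩, hC⟩
    exact (hC C').2 h
  rw [Fintype.card_subtype, hM.card_matchedPairs_eq_card_left,
    hM.card_matchedPairs_eq_card_right, numCritical, add_assoc,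
    ← Finset.card_union_of_disjoint, ← Finset.filter_or]
  · simp only [and_comm (a := IsCritical M _), ← and_or_left, hnot_left]
    simpa only [Finset.filter_filter] using (Finset.card_filter_add_card_filter_not
      (s := Finset.univ.filter fun C => (Qg C : ℤ) = k ∧ (Eg C : ℤ) = m) fun C => ∃ C', M C C').symm
  · exact Finset.disjoint_filter.2 fun C _ h h' => hdisj C ⟨h.2, h'.1⟩

theorem SHdim_le_numCritical (hM : IsMorseMatching M ω) (k m : ℤ) :
    SHdim G k m ≤ numCritical M k m := by
  have h₁ := hM.card_matchedPairs_le_rankD k m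
  have h₂ := hM.card_matchedPairs_le_rankD (k - 1) m
  have h₃ := hM.card_gradedPiece k m
  have h₄ := SHdim_add_rankD G k m
  lia

theorem rankD_eq_card_matchedPairs (hM : IsMorseMatching M ω) {k m : ℤ}
    (hcrit : numCritical M k m = 0) :
    rankD G k m = (matchedPairs M k m).card ∧
      rankD G (k - 1) m = (matchedPairs M (k - 1) m).card := by
  have h₁ := hM.card_matchedPairs_le_rankD k m
  have h₂ := hM.card_matchedPairs_le_rankD (k - 1) m
  have h₃ := hM.card_gradedPiece k m
  have h₄ := SHdim_add_rankD G k m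
  lia

/-- By `hleft` and `hright` the degrees `k` and `k + 1` split off the Morse complex, and both
counts give the Euler characteristic of this summand. -/
theorem SHdim_add_numCritical (hM : IsMorseMatching M ω) {k m : ℤ}
    (hleft : numCritical M (k - 1) m = 0) (hright : numCritical M (k + 2) m = 0) :
    SHdim G k m + numCritical M (k + 1) m = SHdim G (k + 1) m + numCritical M k m := by
  have hl := (hM.rankD_eq_card_matchedPairs hleft).1
  have hr := (hM.rankD_eq_card_matchedPairs hright).2
  have h₁ := hM.card_gradedPiece k m
  have h₂ := SHdim_add_rankD G k m
  have h₃ := hM.card_gradedPiece (k + 1) m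
  have h₄ := SHdim_add_rankD G (k + 1) m
  rw [show k + 2 - 1 = k + 1 by ring] at hr
  rw [add_sub_cancel_right] at h₃ h₄
  lia

end IsMorseMatching

/-! ### The leftmost matching of a graph on `Fin n` -/

section Leftmost

variable {n : ℕ} {H : SimpleGraph (Fin n)} {C C' : Config H} {u v x y : Fin n}

namespace Config

/-- A pair of consecutive vertices at which a configuration is either red or the result, with
signs `+` and `-`, of resolving a red edge. -/
def IsActive (C : Config H) (u v : Fin n) : Prop :=
  (u : ℕ) + 1 = v ∧
    (s(u, v) ∈ C.red ∨ H.Adj u v ∧ C.sign u = some true ∧ C.sign v = some false)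

/-- The leftmost active pair of a configuration. -/
def IsPivot (C : Config H) (u v : Fin n) : Prop :=
  C.IsActive u v ∧ ∀ x y, C.IsActive x y → u ≤ x

theorem IsActive.right_eq (h : C.IsActive u v) (h' : C.IsActive u y) : v = y :=
  Fin.ext (h.1.symm.trans h'.1)

theorem IsPivot.eq (h : C.IsPivot u v) (h' : C.IsPivot x y) : u = x ∧ v = y := by
  obtain rfl : u = x := le_antisymm (h.2 x y h'.1) (h'.2 u v h.1)
  exact ⟨rfl, h.1.right_eq h'.1⟩

theorem IsActive.exists_isPivot (h : C.IsActive x y) : ∃ u v, C.IsPivot u v := by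
  obtain ⟨u, ⟨v, hv⟩, hmin⟩ := (Set.toFinite {u | ∃ v, C.IsActive u v}).exists_minimal ⟨x, y, h⟩
  exact ⟨u, v, hv, fun x y hxy => le_of_not_gt fun hlt => hlt.not_ge (hmin ⟨y, hxy⟩ hlt.le)⟩

namespace Resolves

theorem isActive_left (h : C.Resolves C' u v) (huv : (u : ℕ) + 1 = v) : C.IsActive u v :=
  ⟨huv, Or.inl h.mem_red⟩

theorem isActive_right (h : C.Resolves C' u v) (huv : (u : ℕ) + 1 = v) : C'.IsActive u v :=
  ⟨huv, Or.inr ⟨h.adj, h.sign_left, h.sign_right⟩⟩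

theorem isActive_iff_of_lt (h : C.Resolves C' u v) (huv : (u : ℕ) + 1 = v) (hx : x < u) :
    C.IsActive x y ↔ C'.IsActive x y := by
  have hne : s(x, y) ≠ s(u, v) := by
    intro heq
    rcases Sym2.eq_iff.1 heq with ⟨rfl, rfl⟩ | ⟨rfl, rfl⟩ <;> lia
  have hred : s(x, y) ∈ C.red ↔ s(x, y) ∈ C'.red := by
    simp [h.red_eq, hne]
  have hsign_x : C'.sign x = C.sign x := h.sign_eq x (by lia) (by lia)
  refine and_congr_right fun hxy => or_congr hred (and_congr_right fun _ => ?_)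
  have hsign_y : C.sign y = some false ↔ C'.sign y = some false := by
    rw [h.sign_eq_some_false_iff, or_iff_right (by lia)]
  rw [hsign_x, hsign_y]

theorem isPivot_iff (h : C.Resolves C' u v) (huv : (u : ℕ) + 1 = v) :
    C.IsPivot u v ↔ C'.IsPivot u v := by
  simp only [IsPivot, h.isActive_left huv, h.isActive_right huv, true_and]
  refine forall₂_congr fun x y => ?_
  rcases lt_or_ge x u with hx | hx
  · rw [h.isActive_iff_of_lt huv hx]
  · simp [hx]

end Resolves

end Config

open Config

/-- The matching that pairs two configurations if the second is obtained from the first by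
resolving its leftmost active pair `(u, v)` into `(+, -)`. -/
def leftmostMatching (C D : Config H) : Prop :=
  ∃ u v, C.IsPivot u v ∧ C.Resolves D u v

/-- The weight showing that the leftmost matching is acyclic. Resolving a red edge never
increases it, and preserves it exactly when the edge joins `u` to `u + 1` and becomes `(+, -)`. -/
noncomputable def leftmostWeight (C : Config H) : ℕ :=
  ∑ x with C.sign x = some false, ((x : ℕ) + 1) + ∑ e ∈ C.red, (2 * (e.sup : ℕ) - e.inf)

theorem Config.Resolves.leftmostWeight_add (h : C.Resolves C' u v) :
    leftmostWeight C' + (2 * max (u : ℕ) v - min (u : ℕ) v) = leftmostWeight C + (v + 1) := by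
  have hmax : ((u ⊔ v : Fin n) : ℕ) = max (u : ℕ) v := Fin.val_strictMono.monotone.map_max
  have hmin : ((u ⊓ v : Fin n) : ℕ) = min (u : ℕ) v := Fin.val_strictMono.monotone.map_min
  rw [leftmostWeight, leftmostWeight, h.sum_minus, h.sum_red, Sym2.sup_mk, Sym2.inf_mk, hmax, hmin]
  ring

theorem Config.Resolves.leftmostWeight_eq (h : C.Resolves C' u v) (huv : (u : ℕ) + 1 = v) :
    leftmostWeight C' = leftmostWeight C := by
  have hadd := h.leftmostWeight_add
  lia

theorem Config.Resolves.leftmostWeight_lt (h : C.Resolves C' u v) (huv : (u : ℕ) + 1 ≠ v) :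
    leftmostWeight C' < leftmostWeight C := by
  have hadd := h.leftmostWeight_add
  have hne : (u : ℕ) ≠ v := Fin.val_injective.ne h.adj.ne
  lia

theorem leftmostMatching.eq_of_resolves {C₁ C₁' : Config H} (h : leftmostMatching C C')
    (h₁ : leftmostMatching C₁ C₁') (hxy : (x : ℕ) + 1 = y) (hres : C₁.Resolves C' x y) :
    C = C₁ := by
  obtain ⟨u, v, hpiv, huv⟩ := h
  have hpiv' := (huv.isPivot_iff hpiv.1.1).1 hpiv
  rcases (hpiv'.2 x y (hres.isActive_right hxy)).eq_or_lt with rfl | hlt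
  · obtain rfl := hpiv'.1.right_eq (hres.isActive_right hxy)
    exact huv.left_unique hres
  exfalso
  -- To the left of `x`, the vertices `u, v` carry `+-` in `C₁` and so form its pivot, which is red.
  obtain ⟨a, b, hpiv₁, hab⟩ := h₁
  have hvx : v ≠ x := by
    rintro rfl
    simpa [huv.sign_right] using hres.sign_left
  have hv : v < x := by have := hpiv.1.1; lia
  have hu₁ : C₁.sign u = some true := by
    rw [← hres.sign_eq u (by lia) (by lia), huv.sign_left]
  have hv₁ : C₁.sign v = some false := by
    rw [← hres.sign_eq v (by lia) (by lia), huv.sign_right]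
  have hau : a ≤ u := hpiv₁.2 u v ⟨hpiv.1.1, Or.inr ⟨huv.adj, hu₁, hv₁⟩⟩
  have hua : u ≤ a := hpiv'.2 a b ((hres.isActive_iff_of_lt hxy (hau.trans_lt hlt)).1 hpiv₁.1)
  obtain rfl := le_antisymm hau hua
  simpa [hu₁] using sign_eq_none_left hab.mem_red

theorem isMorseMatching_leftmostMatching (H : SimpleGraph (Fin n)) :
    IsMorseMatching (leftmostMatching (H := H)) leftmostWeight where
  step := fun ⟨u, v, _, h⟩ => DStep_iff_exists_resolves.2 ⟨u, v, h⟩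
  biUnique := by
    constructor
    · rintro C₁ C' C₂ ⟨u, v, hpiv₁, h₁⟩ ⟨x, y, hpiv₂, h₂⟩
      obtain ⟨rfl, rfl⟩ := ((h₁.isPivot_iff hpiv₁.1.1).1 hpiv₁).eq
        ((h₂.isPivot_iff hpiv₂.1.1).1 hpiv₂)
      exact h₁.left_unique h₂
    · rintro C C₁ C₂ ⟨u, v, hpiv₁, h₁⟩ ⟨x, y, hpiv₂, h₂⟩
      obtain ⟨rfl, rfl⟩ := hpiv₁.eq hpiv₂
      exact h₁.right_unique h₂
  disjoint := by
    rintro C₁ C₂ C₃ ⟨u, v, hpiv₁, h₁⟩ ⟨x, y, hpiv₂, h₂⟩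
    obtain ⟨rfl, rfl⟩ := ((h₁.isPivot_iff hpiv₁.1.1).1 hpiv₁).eq hpiv₂
    exact h₁.notMem_red h₂.mem_red
  lt_of_DStep {C C' C₁ C₁'} h h₁ hstep hne := by
    obtain ⟨u, v, hpiv, huv⟩ := id h
    obtain ⟨x, y, hxy⟩ := DStep_iff_exists_resolves.1 hstep
    rw [← huv.leftmostWeight_eq hpiv.1.1]
    exact hxy.leftmostWeight_lt fun hcons => hne (h.eq_of_resolves h₁ hcons hxy)

theorem isCritical_leftmostMatching_iff :
    IsCritical leftmostMatching C ↔ ∀ u v, ¬C.IsActive u v := by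
  constructor
  · intro hC x y hxy
    obtain ⟨u, v, hpiv⟩ := hxy.exists_isPivot
    rcases hpiv.1 with ⟨huv, hred | ⟨hadj, hu, hv⟩⟩
    · obtain ⟨C', h⟩ := exists_resolves hred
      exact (hC C').1 ⟨u, v, hpiv, h⟩
    · obtain ⟨C', h⟩ := exists_resolves_right hadj hu hv
      exact (hC C').2 ⟨u, v, (h.isPivot_iff huv).2 hpiv, h⟩
  · rintro hC C'
    constructor
    · rintro ⟨u, v, hpiv, -⟩
      exact hC u v hpiv.1
    · rintro ⟨u, v, hpiv, h⟩
      exact hC u v (h.isActive_right hpiv.1.1)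

end Leftmost

/-! ### The cohomology without red edges of a connected graph -/

theorem submonoid_eq_top_of_swap_mem {α : Type*} [Finite α] [DecidableEq α] {H : SimpleGraph α}
    (hH : H.Connected) {M : Submonoid (Equiv.Perm α)}
    (hM : ∀ u v, H.Adj u v → Equiv.swap u v ∈ M) : M = ⊤ := by
  have hswap (u v : α) : Equiv.swap u v ∈ M := by
    obtain ⟨p⟩ := hH.preconnected u v
    induction p with
    | nil => rw [Equiv.swap_self]; exact M.one_mem
    | cons hadj _ ih => exact SubmonoidClass.swap_mem_trans M (hM _ _ hadj) ih
  rw [← top_le_iff, ← Equiv.Perm.mclosure_isSwap, Submonoid.closure_le]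
  rintro _ ⟨u, v, -, rfl⟩
  exact hswap u v

theorem exists_perm_comp_eq {α : Type*} [Fintype α] {s t : α → Bool}
    (h : (Finset.univ.filter fun x => s x = false).card =
      (Finset.univ.filter fun x => t x = false).card) : ∃ σ : Equiv.Perm α, s ∘ σ = t := by
  have hcard (b : Bool) : Fintype.card {x // t x = b} = Fintype.card {x // s x = b} := by
    have hs := Finset.card_filter_add_card_filter_not (s := Finset.univ) fun x => s x = false
    have ht := Finset.card_filter_add_card_filter_not (s := Finset.univ) fun x => t x = false
    simp only [Bool.not_eq_false] at hs ht
    cases b <;> simp only [Fintype.card_subtype] <;> lia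
  exact ⟨Equiv.ofFiberEquiv fun b => Fintype.equivOfCardEq (hcard b),
    funext fun x => Equiv.ofFiberEquiv_map _ x⟩

namespace Config

omit [Fintype V] in
theorem isMatching_empty (G : SimpleGraph V) : IsMatching G ∅ := by simp [IsMatching]

/-- The configuration without red edges given by a sign function. -/
noncomputable def ofAllSigns (G : SimpleGraph V) (s : V → Bool) : Config G :=
  ofSigns (isMatching_empty G) s

omit [Fintype V] in
theorem sign_ofAllSigns (s : V → Bool) (v : V) : (ofAllSigns G s).sign v = some (s v) := by
  simp [ofAllSigns, ofSigns]

theorem qg_ofAllSigns (s : V → Bool) :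
    Qg (ofAllSigns G s) = (Finset.univ.filter fun v => s v = false).card := by
  simp only [Qg, sign_ofAllSigns, Option.some.injEq]

theorem eg_ofAllSigns (s : V → Bool) :
    Eg (ofAllSigns G s) = (Finset.univ.filter fun v => s v = false).card := by
  rw [Eg, qg_ofAllSigns]
  rfl

theorem exists_eq_ofAllSigns {C : Config G} (hC : Qg C = Eg C) : ∃ s, C = ofAllSigns G s :=
  exists_eq_ofSigns _ (by simpa [Eg] using hC)

omit [Fintype V] in
theorem Resolves.DStep_iff {C C₁ C₂ D : Config G} {u v : V} (hred : C.red = {s(u, v)})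
    (h₁ : C.Resolves C₁ u v) (h₂ : C.Resolves C₂ v u) : DStep C D ↔ D = C₁ ∨ D = C₂ := by
  rw [DStep_iff_exists_resolves]
  constructor
  · rintro ⟨x, y, h⟩
    have hxy := h.mem_red
    rw [hred, Finset.mem_singleton, Sym2.eq_iff] at hxy
    rcases hxy with ⟨rfl, rfl⟩ | ⟨rfl, rfl⟩
    exacts [Or.inl (h.right_unique h₁), Or.inr (h.right_unique h₂)]
  · rintro (rfl | rfl)
    exacts [⟨u, v, h₁⟩, ⟨v, u, h₂⟩]

theorem even_card_DStep {C : Config G} (hC : C.red.card = 1) :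
    Even (Finset.univ.filter fun D => DStep C D).card := by
  obtain ⟨⟨u, v⟩, hred⟩ := Finset.card_eq_one.1 hC
  obtain ⟨C₁, h₁⟩ := exists_resolves (C := C) (u := u) (v := v) (by simp [hred])
  obtain ⟨C₂, h₂⟩ := exists_resolves (C := C) (u := v) (v := u) (by simp [hred, Sym2.eq_swap])
  have hne : C₁ ≠ C₂ := by
    rintro rfl
    simpa [h₁.sign_left] using h₂.sign_right
  have hfilter : (Finset.univ.filter fun D => DStep C D) = {C₁, C₂} := by
    ext D
    simp [h₁.DStep_iff hred h₂]
  rw [hfilter, Finset.card_pair hne]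
  exact even_two

end Config

open Config

/-- The basis vector of `ofAllSigns G s` in `SC^m(G,m)`, or `0` if `s` does not have exactly `m`
minuses. -/
noncomputable def signVector (G : SimpleGraph V) (m : ℤ) (s : V → Bool) : SC G m m :=
  fun C => if C.1 = ofAllSigns G s then 1 else 0

theorem signVector_eq_zero {m : ℤ} {s : V → Bool}
    (h : ((Finset.univ.filter fun v => s v = false).card : ℤ) ≠ m) : signVector G m s = 0 := by
  funext C
  refine if_neg fun hC => h ?_
  rw [← C.2.1, hC, qg_ofAllSigns]

theorem signVector_add_signVector_swap_mem_range {u v : V} (huv : G.Adj u v) (m : ℤ)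
    {s : V → Bool} (hu : s u = true) (hv : s v = false) :
    signVector G m s + signVector G m (s ∘ Equiv.swap u v) ∈
      LinearMap.range (Dgr G (m - 1) m m m) := by
  obtain ⟨C, h₁⟩ := exists_resolves_right (C' := ofAllSigns G s) huv
    (by rw [sign_ofAllSigns, hu]) (by rw [sign_ofAllSigns, hv])
  have hred : C.red = {s(u, v)} := h₁.red_eq_insert
  have h₂ : C.Resolves (ofAllSigns G (s ∘ Equiv.swap u v)) v u := by
    refine ⟨Sym2.eq_swap ▸ h₁.mem_red, ?_, fun x hxv hxu => ?_, ?_, ?_⟩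
    · rw [hred, Sym2.eq_swap, Finset.erase_singleton]
      rfl
    · rw [← h₁.sign_eq x hxu hxv, sign_ofAllSigns, sign_ofAllSigns, Function.comp_apply,
        Equiv.swap_apply_of_ne_of_ne hxu hxv]
    · simp [sign_ofAllSigns, hu]
    · simp [sign_ofAllSigns, hv]
  have hQ := h₁.qg_eq
  by_cases hm : ((Finset.univ.filter fun v => s v = false).card : ℤ) = m
  · have hE := h₁.eg_eq
    rw [qg_ofAllSigns] at hQ
    rw [eg_ofAllSigns] at hE
    refine ⟨Pi.single ⟨C, by lia, by lia⟩ 1, (sumLin_single _ _).trans (funext fun D => ?_)⟩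
    have hne : ofAllSigns G s ≠ ofAllSigns G (s ∘ Equiv.swap u v) := fun heq => by
      simpa [sign_ofAllSigns, hu, hv] using congrArg (fun C => C.sign u) heq
    simp only [signVector, Pi.add_apply, h₁.DStep_iff hred h₂]
    by_cases hD : D.1 = ofAllSigns G s <;> simp [hD, hne]
  · have hm' := hm
    rw [← qg_ofAllSigns (G := G), hQ, ← h₂.qg_eq, qg_ofAllSigns] at hm'
    rw [signVector_eq_zero hm, signVector_eq_zero hm', add_zero]
    exact Submodule.zero_mem _

theorem signVector_add_signVector_mem_range (hG : G.Connected) (m : ℤ) {s t : V → Bool}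
    (hst : (Finset.univ.filter fun x => s x = false).card =
      (Finset.univ.filter fun x => t x = false).card) :
    signVector G m s + signVector G m t ∈ LinearMap.range (Dgr G (m - 1) m m m) := by
  have hself (s : V → Bool) : signVector G m s + signVector G m s ∈
      LinearMap.range (Dgr G (m - 1) m m m) := by
    rw [ZModModule.add_self]
    exact Submodule.zero_mem _
  let M : Submonoid (Equiv.Perm V) :=
    { carrier := {σ | ∀ s, signVector G m s + signVector G m (s ∘ σ) ∈
        LinearMap.range (Dgr G (m - 1) m m m)}
      one_mem' := hself
      mul_mem' := fun {σ τ} hσ hτ s => by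
        have h := Submodule.add_mem _ (hσ s) (hτ (s ∘ σ))
        rwa [ZModModule.add_add_add_cancel] at h }
  have hM : M = ⊤ := submonoid_eq_top_of_swap_mem hG fun u v huv s => by
    by_cases hs : s u = s v
    · have hcomp : s ∘ Equiv.swap u v = s := by
        rw [Equiv.comp_swap_eq_update, hs, Function.update_eq_self, ← hs,
          Function.update_eq_self]
      rw [hcomp]
      exact hself s
    cases hu : s u <;> cases hv : s v
    · exact absurd (hu.trans hv.symm) hs
    · rw [Equiv.swap_comm]
      exact signVector_add_signVector_swap_mem_range huv.symm m hv hu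
    · exact signVector_add_signVector_swap_mem_range huv m hu hv
    · exact absurd (hu.trans hv.symm) hs
  obtain ⟨σ, rfl⟩ := exists_perm_comp_eq hst
  exact (hM ▸ Submonoid.mem_top σ : σ ∈ M) s

/-- The sum of the coefficients of a cochain. -/
noncomputable def coeffSum (G : SimpleGraph V) (m : ℤ) : SC G m m →ₗ[ZMod 2] ZMod 2 :=
  ∑ C, LinearMap.proj C

theorem coeffSum_comp_Dgr (m : ℤ) : coeffSum G m ∘ₗ Dgr G (m - 1) m m m = 0 := by
  refine LinearMap.pi_ext' fun C => LinearMap.ext_ring ?_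
  have hC := C.2
  have heven : Even (Finset.univ.filter
      fun D : {C : Config G // (Qg C : ℤ) = m ∧ (Eg C : ℤ) = m} => DStep C.1 D.1).card := by
    rw [card_filter_subtype_eq fun D (h : DStep C.1 D) => ?_]
    · refine even_card_DStep ?_
      rw [Eg] at hC
      lia
    · have hQ := h.qg_eq
      have hE := h.eg_eq
      exact ⟨by lia, by lia⟩
  have hsum : coeffSum G m (Dgr G (m - 1) m m m (Pi.single C 1)) =
      ((Finset.univ.filter fun D : {C : Config G // (Qg C : ℤ) = m ∧ (Eg C : ℤ) = m} =>
        DStep C.1 D.1).card : ZMod 2) := by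
    rw [Dgr, sumLin_single]
    simp [coeffSum]
  simpa [hsum] using ZMod.natCast_eq_zero_iff_even.2 heven

theorem exists_single_eq_signVector {m : ℤ}
    (C : {C : Config G // (Qg C : ℤ) = m ∧ (Eg C : ℤ) = m}) :
    ∃ s : V → Bool, ((Finset.univ.filter fun v => s v = false).card : ℤ) = m ∧
      (Pi.single C 1 : SC G m m) = signVector G m s := by
  obtain ⟨s, hs⟩ := exists_eq_ofAllSigns (C := C.1) (by lia)
  refine ⟨s, by rw [← qg_ofAllSigns (G := G), ← hs, C.2.1], funext fun D => ?_⟩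
  simp only [signVector, ← hs, Pi.single_apply, Subtype.ext_iff]

theorem range_Dgr_eq_ker_coeffSum (hG : G.Connected) (m : ℤ) :
    LinearMap.range (Dgr G (m - 1) m m m) = LinearMap.ker (coeffSum G m) := by
  refine le_antisymm (LinearMap.range_le_ker_iff.2 (coeffSum_comp_Dgr m)) fun f hf => ?_
  rcases isEmpty_or_nonempty {C : Config G // (Qg C : ℤ) = m ∧ (Eg C : ℤ) = m} with _ | ⟨⟨C₀⟩⟩
  · rw [Subsingleton.elim f 0]
    exact Submodule.zero_mem _
  have hsum : ∑ C, f C = 0 := by simpa [coeffSum] using hf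
  have hf : f = ∑ C, f C • (Pi.single C 1 + Pi.single C₀ 1 : SC G m m) := by
    simp only [smul_add, Finset.sum_add_distrib, ← Finset.sum_smul, hsum, zero_smul, add_zero]
    exact pi_eq_sum_univ' f
  rw [hf]
  refine Submodule.sum_mem _ fun C _ => Submodule.smul_mem _ _ ?_
  obtain ⟨s, hs, hCs⟩ := exists_single_eq_signVector C
  obtain ⟨t, ht, hCt⟩ := exists_single_eq_signVector C₀
  rw [hCs, hCt]
  exact signVector_add_signVector_mem_range hG m (by lia)

theorem SHdim_self (hG : G.Connected) {m : ℤ} (h₀ : 0 ≤ m) (hm : m ≤ Fintype.card V) :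
    SHdim G m m = 1 := by
  lift m to ℕ using h₀
  obtain ⟨S, -, hS⟩ := Finset.exists_subset_card_eq (s := (Finset.univ : Finset V)) (n := m)
    (by rw [Finset.card_univ]; lia)
  have hcard : (Finset.univ.filter fun v => decide (v ∉ S) = false).card = m := by simpa using hS
  let C₀ : {C : Config G // (Qg C : ℤ) = m ∧ (Eg C : ℤ) = m} :=
    ⟨ofAllSigns G fun v => decide (v ∉ S), by rw [qg_ofAllSigns, hcard],
      by rw [eg_ofAllSigns, hcard]⟩
  have hsurj : LinearMap.range (coeffSum G m) = ⊤ :=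
    LinearMap.range_eq_top.2 fun a => ⟨Pi.single C₀ a, by simp [coeffSum]⟩
  have hnext : rankD G m m = 0 := by
    have : IsEmpty {C : Config G // (Qg C : ℤ) = m + 1 ∧ (Eg C : ℤ) = m} :=
      ⟨fun C => by have hC := C.2; rw [Eg] at hC; lia⟩
    exact Module.finrank_zero_of_subsingleton
  have hSH := SHdim_add_rankD G m m
  have hker := (coeffSum G m).finrank_range_add_finrank_ker
  rw [hsurj, finrank_top, Module.finrank_self, ← range_Dgr_eq_ker_coeffSum hG,
    finrank_range_Dgr _ (sub_add_cancel _ 1), Module.finrank_fintype_fun_eq_card] at hker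
  lia

/-! ### Critical configurations on a tail -/

theorem exists_threshold {c n : ℕ} (hcn : c ≤ n) {P : ℕ → Prop}
    (hP : ∀ j, c ≤ j → j + 1 < n → P j → P (j + 1)) :
    ∃ i, c ≤ i ∧ i ≤ n ∧ ∀ j, c ≤ j → j < n → (P j ↔ i ≤ j) := by
  have hex : ∃ i, c ≤ i ∧ (i < n → P i) := ⟨n, hcn, fun h => absurd h (lt_irrefl n)⟩
  obtain ⟨hci, hPi⟩ := Nat.find_spec hex
  refine ⟨Nat.find hex, hci, Nat.find_min' hex ⟨hcn, fun h => absurd h (lt_irrefl n)⟩,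
    fun j hcj hjn => ⟨fun hPj => Nat.find_min' hex ⟨hcj, fun _ => hPj⟩, fun hij => ?_⟩⟩
  induction j, hij using Nat.le_induction with
  | base => exact hPi hjn
  | succ j hij ih => exact hP j (hci.trans hij) hjn (ih (hci.trans hij) (by lia))

/-- A matching `R` of a graph on `Fin n` without edges between consecutive vertices, whose uncovered
vertices are a vertex `p` and the vertices of a path `c, …, n - 1` beyond `p`. -/
structure HasTail {n : ℕ} (H : SimpleGraph (Fin n)) (R : Finset (Sym2 (Fin n))) (p : Fin n)
    (c : ℕ) : Prop where
  isMatching : IsMatching H R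
  notMem {u v : Fin n} : (u : ℕ) + 1 = v → s(u, v) ∉ R
  uncovered_iff (v : Fin n) : (¬∃ e ∈ R, v ∈ e) ↔ v = p ∨ c ≤ v
  lt : (p : ℕ) < c
  le : c ≤ n
  adj {u v : Fin n} : c ≤ u → (u : ℕ) + 1 = v → H.Adj u v
  not_adj {v : Fin n} : (p : ℕ) + 1 = v → c ≤ v → ¬H.Adj p v

namespace HasTail

variable {n : ℕ} {H : SimpleGraph (Fin n)} {R : Finset (Sym2 (Fin n))} {p : Fin n} {c : ℕ}

/-- The configuration with red edges `R` whose sign at `p` is `b` and whose signs on `c, …, n - 1`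
are `-` before `i` and `+` from `i` on. -/
noncomputable def thresholdConfig (h : HasTail H R p c) (b : Bool) (i : ℕ) : Config H :=
  ofSigns h.isMatching fun v => if v = p then b else decide (i ≤ v)

theorem covered_iff (h : HasTail H R p c) (v : Fin n) : (∃ e ∈ R, v ∈ e) ↔ ¬(v = p ∨ c ≤ v) := by
  rw [← h.uncovered_iff, not_not]

theorem sign_thresholdConfig (h : HasTail H R p c) (b : Bool) (i : ℕ) (v : Fin n) :
    (h.thresholdConfig b i).sign v =
      if v = p then some b else if c ≤ v then some (decide (i ≤ v)) else none := by
  simp only [thresholdConfig, ofSigns, h.covered_iff]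
  split_ifs <;> simp_all

theorem isCritical_iff (h : HasTail H R p c) {C : Config H} (hC : C.red = R) :
    IsCritical leftmostMatching C ↔
      ∀ u v : Fin n, c ≤ u → (u : ℕ) + 1 = v → C.sign u = some true → C.sign v = some true := by
  rw [isCritical_leftmostMatching_iff]
  have hnone (v : Fin n) : C.sign v ≠ none ↔ v = p ∨ c ≤ v := by
    rw [← h.uncovered_iff, ne_eq, C.sign_none, hC]
  constructor
  · intro hact u v hcu huv hu
    rcases hv : C.sign v with _ | _ | _
    · exact absurd hv ((hnone v).2 (Or.inr (by lia)))
    · exact absurd ⟨huv, Or.inr ⟨h.adj hcu huv, hu, hv⟩⟩ (hact u v)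
    · rfl
  · rintro hmono u v ⟨huv, hred | ⟨hadj, hu, hv⟩⟩
    · exact h.notMem huv (hC ▸ hred)
    · have hlt := h.lt
      have hcv : c ≤ v := ((hnone v).1 (by simp [hv])).resolve_left (by
        rintro rfl
        rcases (hnone u).1 (by simp [hu]) with rfl | hcu <;> lia)
      rcases (hnone u).1 (by simp [hu]) with rfl | hcu
      · exact h.not_adj huv hcv hadj
      · simp [hmono u v hcu huv hu] at hv

theorem isCritical_and_red_eq_iff (h : HasTail H R p c) {C : Config H} :
    IsCritical leftmostMatching C ∧ C.red = R ↔
      ∃ b i, c ≤ i ∧ i ≤ n ∧ C = h.thresholdConfig b i := by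
  constructor
  · rintro ⟨hcrit, hC⟩
    obtain ⟨s, rfl⟩ := exists_eq_ofSigns h.isMatching hC
    have hsign {v : Fin n} (hv : c ≤ v) : (ofSigns h.isMatching s).sign v = some (s v) :=
      if_neg ((h.uncovered_iff v).2 (Or.inr hv))
    obtain ⟨i, hci, hin, hi⟩ := exists_threshold h.le
      (P := fun j => ∃ hj : j < n, s ⟨j, hj⟩ = true) fun j hcj hjn ⟨hj, hs⟩ => by
        have := (h.isCritical_iff hC).1 hcrit ⟨j, hj⟩ ⟨j + 1, hjn⟩ hcj rfl
        rw [hsign hcj, hsign (by lia)] at this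
        exact ⟨hjn, by simpa [hs] using this⟩
    refine ⟨s p, i, hci, hin, Config.ext rfl (funext fun v => ?_)⟩
    have hsv (hcv : c ≤ v) : s v = decide (i ≤ (v : ℕ)) := by
      rw [Bool.eq_iff_iff, decide_eq_true_iff, ← hi v hcv v.2]
      exact ⟨fun hs => ⟨v.2, hs⟩, fun ⟨_, hs⟩ => hs⟩
    rw [sign_thresholdConfig]
    simp only [ofSigns, h.covered_iff]
    by_cases hvp : v = p
    · simp [hvp]
    by_cases hcv : c ≤ v
    · simp [hvp, hcv, hsv hcv]
    · simp [hvp, hcv]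
  · rintro ⟨b, i, -, -, rfl⟩
    refine ⟨(h.isCritical_iff rfl).2 fun u v hcu huv => ?_, rfl⟩
    have hlt := h.lt
    have hup : u ≠ p := by lia
    have hvp : v ≠ p := by lia
    have hcv : c ≤ v := by lia
    simp only [sign_thresholdConfig, hup, hvp, hcu, hcv, if_true, if_false, Option.some_inj,
      decide_eq_true_iff]
    lia

theorem qg_thresholdConfig (h : HasTail H R p c) (b : Bool) {i : ℕ} (hin : i ≤ n) :
    Qg (h.thresholdConfig b i) = (i - c) + (!b).toNat := by
  have hlt := h.lt
  have hminus : ({v | (h.thresholdConfig b i).sign v = some false} : Finset (Fin n)).map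
      Fin.valEmbedding = Finset.Ico c i ∪ if b then ∅ else {(p : ℕ)} := by
    ext x
    simp only [Finset.mem_map, Finset.mem_filter_univ, sign_thresholdConfig, Finset.mem_union,
      Finset.mem_Ico, Fin.valEmbedding_apply]
    constructor
    · rintro ⟨v, hv, rfl⟩
      split_ifs at hv with hvp hcv
      · simp_all
      · simp_all
    · rintro (⟨hcx, hxi⟩ | hx)
      · refine ⟨⟨x, by lia⟩, ?_, rfl⟩
        have hxp : (⟨x, by lia⟩ : Fin n) ≠ p := by lia
        simp [hxp, hcx, hxi]
      · cases b
        · exact ⟨p, by simp, (Finset.mem_singleton.1 hx).symm⟩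
        · simp at hx
  have hdisj : Disjoint (Finset.Ico c i) (if b then ∅ else {(p : ℕ)}) := by
    cases b <;> simp [hlt]
  rw [Qg, ← Finset.card_map Fin.valEmbedding, hminus, Finset.card_union_of_disjoint hdisj]
  cases b <;> simp

theorem card_isCritical (h : HasTail H R p c) (k : ℤ) :
    (Finset.univ.filter fun C : Config H =>
      (IsCritical leftmostMatching C ∧ C.red = R) ∧ (Qg C : ℤ) = k).card =
      (if 0 ≤ k ∧ k ≤ n - c then 1 else 0) + (if 1 ≤ k ∧ k ≤ n - c + 1 then 1 else 0) := by
  have hfilter : (Finset.univ.filter fun C : Config H =>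
      (IsCritical leftmostMatching C ∧ C.red = R) ∧ (Qg C : ℤ) = k) =
      (Finset.univ.filter fun b : Bool =>
        ((!b).toNat : ℤ) ≤ k ∧ k ≤ n - c + (!b).toNat).image
        fun b => h.thresholdConfig b (k + c - (!b).toNat).toNat := by
    ext C
    rw [Finset.mem_filter_univ, Finset.mem_image, h.isCritical_and_red_eq_iff]
    constructor
    · rintro ⟨⟨b, i, hci, hin, rfl⟩, hQ⟩
      rw [h.qg_thresholdConfig b hin] at hQ
      have hi : (k + c - (!b).toNat).toNat = i := by lia
      exact ⟨b, (Finset.mem_filter_univ b).2 ⟨by lia, by lia⟩, by rw [hi]⟩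
    · rintro ⟨b, hb, rfl⟩
      rw [Finset.mem_filter_univ] at hb
      refine ⟨⟨b, (k + c - (!b).toNat).toNat, by lia, by lia, rfl⟩, ?_⟩
      rw [h.qg_thresholdConfig b (by lia)]
      lia
  have hinj : Function.Injective fun b => h.thresholdConfig b (k + c - (!b).toNat).toNat :=
    fun b b' hb => by simpa [sign_thresholdConfig] using congrArg (fun C => C.sign p) hb
  rw [hfilter, Finset.card_image_of_injective _ hinj, Finset.card_filter, Fintype.sum_bool]
  simp

end HasTail

/-! ### The Dynkin diagram `D_n` -/

section DynkinD

variable {n : ℕ}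

theorem dynkinD_adj_iff {u v : Fin n} : (dynkinD n).Adj u v ↔
    (u : ℕ) = 0 ∧ (v : ℕ) = 2 ∨ (v : ℕ) = 0 ∧ (u : ℕ) = 2 ∨
      1 ≤ (u : ℕ) ∧ (u : ℕ) + 1 = v ∨ 1 ≤ (v : ℕ) ∧ (v : ℕ) + 1 = u := by
  rw [dynkinD, SimpleGraph.fromRel_adj]
  lia

theorem connected_dynkinD (hn : 3 ≤ n) : (dynkinD n).Connected := by
  refine (SimpleGraph.connected_iff_exists_forall_reachable _).2 ⟨⟨1, by lia⟩, ?_⟩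
  have hpath : ∀ i (hi : i < n), 1 ≤ i → (dynkinD n).Reachable ⟨1, by lia⟩ ⟨i, hi⟩ := by
    intro i hi h1
    induction i, h1 using Nat.le_induction with
    | base => exact .refl _
    | succ i h1 ih =>
      exact (ih (by lia)).trans (SimpleGraph.Adj.reachable (dynkinD_adj_iff.2 (by simp [h1])))
  rintro ⟨_ | i, hi⟩
  · exact (hpath 2 hn (by lia)).trans (SimpleGraph.Adj.reachable (dynkinD_adj_iff.2 (by simp)))
  · exact hpath (i + 1) hi (by lia)

theorem hasTail_empty (hn : 1 ≤ n) : HasTail (dynkinD n) ∅ ⟨0, hn⟩ 1 where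
  isMatching := ⟨by simp, by simp⟩
  notMem := by simp
  uncovered_iff v := by
    simp only [Finset.notMem_empty, false_and, exists_false, not_false_eq_true, true_iff,
      Fin.ext_iff]
    lia
  lt := one_pos
  le := hn
  adj hu huv := dynkinD_adj_iff.2 (by lia)
  not_adj hv _ hadj := by
    have huv := dynkinD_adj_iff.1 hadj
    lia

/-- The only edge of `D_n` whose ends are not consecutive. -/
def leafEdge (hn : 3 ≤ n) : Sym2 (Fin n) :=
  s(⟨0, by lia⟩, ⟨2, by lia⟩)

theorem hasTail_leafEdge (hn : 3 ≤ n) : HasTail (dynkinD n) {leafEdge hn} ⟨1, by lia⟩ 3 where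
  isMatching := ⟨by simp [leafEdge, dynkinD_adj_iff], by simp⟩
  notMem huv := by
    simp only [leafEdge, Finset.mem_singleton, Sym2.eq_iff, Fin.ext_iff]
    lia
  uncovered_iff v := by
    simp only [leafEdge, Finset.mem_singleton, exists_eq_left, Sym2.mem_iff, Fin.ext_iff]
    lia
  lt := by simp
  le := hn
  adj hu huv := dynkinD_adj_iff.2 (by lia)
  not_adj hv hcv := absurd hcv (by lia)

theorem red_eq_empty_or_eq_leafEdge (hn : 3 ≤ n) {C : Config (dynkinD n)}
    (hC : IsCritical leftmostMatching C) : C.red = ∅ ∨ C.red = {leafEdge hn} := by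
  refine Finset.subset_singleton_iff.1 fun e he => Finset.mem_singleton.2 ?_
  induction e with | _ u v
  rw [isCritical_leftmostMatching_iff] at hC
  have huv := hC u v
  have hvu := hC v u
  simp only [Config.IsActive, he, Sym2.eq_swap (a := v), true_or, and_true] at huv hvu
  rcases dynkinD_adj_iff.1 (C.matching.1 _ he) with h | h | h | h
  · exact Sym2.eq_iff.2 (Or.inl ⟨Fin.ext h.1, Fin.ext h.2⟩)
  · exact Sym2.eq_iff.2 (Or.inr ⟨Fin.ext h.2, Fin.ext h.1⟩)
  · exact absurd h.2 huv
  · exact absurd h.2 hvu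

theorem isCritical_and_eg_eq_iff (hn : 3 ≤ n) {C : Config (dynkinD n)} {k m : ℤ} :
    IsCritical leftmostMatching C ∧ (Qg C : ℤ) = k ∧ (Eg C : ℤ) = m ↔
      m = k ∧ (IsCritical leftmostMatching C ∧ C.red = ∅) ∧ (Qg C : ℤ) = k ∨
      m = k + 1 ∧ (IsCritical leftmostMatching C ∧ C.red = {leafEdge hn}) ∧ (Qg C : ℤ) = k := by
  constructor
  · rintro ⟨hC, rfl, rfl⟩
    rcases red_eq_empty_or_eq_leafEdge hn hC with hred | hred <;> simp [Eg, hC, hred]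
  · rintro (⟨rfl, ⟨hC, hred⟩, rfl⟩ | ⟨rfl, ⟨hC, hred⟩, rfl⟩) <;> simp [Eg, hC, hred]

theorem numCritical_dynkinD_self (hn : 3 ≤ n) (k : ℤ) :
    numCritical (leftmostMatching (H := dynkinD n)) k k =
      (if 0 ≤ k ∧ k ≤ n - 1 then 1 else 0) + (if 1 ≤ k ∧ k ≤ n then 1 else 0) := by
  have h := (hasTail_empty (n := n) (by lia)).card_isCritical k
  simp only [numCritical, isCritical_and_eg_eq_iff hn]
  simpa using h

theorem numCritical_dynkinD_add_one (hn : 3 ≤ n) (k : ℤ) :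
    numCritical (leftmostMatching (H := dynkinD n)) k (k + 1) =
      (if 0 ≤ k ∧ k ≤ n - 3 then 1 else 0) + (if 1 ≤ k ∧ k ≤ n - 2 then 1 else 0) := by
  have h := (hasTail_leafEdge hn).card_isCritical k
  rw [show ((n : ℤ) - (3 : ℕ) + 1) = n - 2 by lia] at h
  simp only [numCritical, isCritical_and_eg_eq_iff hn]
  simpa using h

theorem numCritical_dynkinD_of_ne (hn : 3 ≤ n) {k m : ℤ} (h₀ : m ≠ k) (h₁ : m ≠ k + 1) :
    numCritical (leftmostMatching (H := dynkinD n)) k m = 0 := by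
  simp [numCritical, isCritical_and_eg_eq_iff hn, h₀, h₁]

end DynkinD

/-- the Seifert cohomology of the Dynkin diagram `D_n`:
`dim SH^k(D_n,m) = 1` if `k = m` and `0 ≤ k ≤ n`, `1` if `m = k + 1` and
`1 ≤ k ≤ n - 3`, and `0` otherwise. -/
theorem SHdim_dynkinD (n : ℕ) (hn : 4 ≤ n) (k m : ℤ) :
    SHdim (dynkinD n) k m =
      (if k = m ∧ 0 ≤ k ∧ k ≤ (n : ℤ) then 1 else 0) +
        (if m = k + 1 ∧ 1 ≤ k ∧ k ≤ (n : ℤ) - 3 then 1 else 0) := by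
  have hn₃ : 3 ≤ n := by lia
  have hM := isMorseMatching_leftmostMatching (dynkinD n)
  have hdiag (k : ℤ) : SHdim (dynkinD n) k k = if 0 ≤ k ∧ k ≤ n then 1 else 0 := by
    split_ifs with hk
    · exact SHdim_self (connected_dynkinD hn₃) hk.1 (by simpa using hk.2)
    · have hle := hM.SHdim_le_numCritical k k
      rw [numCritical_dynkinD_self hn₃] at hle
      lia
  by_cases hmk : m = k
  · simp [hmk, hdiag]
  by_cases hmk' : m = k + 1
  · subst hmk'
    have heuler := hM.SHdim_add_numCritical (k := k) (m := k + 1)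
      (numCritical_dynkinD_of_ne hn₃ (by lia) (by lia))
      (numCritical_dynkinD_of_ne hn₃ (by lia) (by lia))
    rw [hdiag, numCritical_dynkinD_self hn₃, numCritical_dynkinD_add_one hn₃] at heuler
    lia
  · have hle := hM.SHdim_le_numCritical k m
    rw [numCritical_dynkinD_of_ne hn₃ hmk hmk'] at hle
    simpa [hmk', Ne.symm hmk] using hle

end Seifert
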